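/- Let X be an N×m real matrix such that XᵀΦ and XᵀLΦ are invertible, and let v̂_X := Φ(XᵀLΦ)⁻¹Xᵀ r. If K ≥ 0 is any constant such that ‖Π_{LᵀX} x‖_ξ ≤ K·‖x‖_ξ for all x ∈ ℝ^N (with Π_{LᵀX} = Φ(XᵀLΦ)⁻¹XᵀL), then ‖v* − v̂_X‖_ξ ≤ K·‖v* − Π v*‖_ξ; that is, the approximation error of the oblique-projection method is at most the ξ-operator norm of Π_{LᵀX} times the best-approximation error ‖v* − v_best‖_ξ. -/

import Mathlib

open Matrix

/-- The ξ-weighted quadratic norm on ℝ^N: ‖x‖_ξ = √(Σ_i ξ_i x_i²). -/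
noncomputable def wnorm {N : ℕ} (ξ : Fin N → ℝ) (x : Fin N → ℝ) : ℝ :=
  Real.sqrt (∑ i, ξ i * (x i) ^ 2)

/-!
The matrix `PiLX` is a nonzero idempotent which fixes the range of `Φ` and sends `vstar` to `vX`.
In an inner product space a bound `‖Q x‖ ≤ K * ‖x‖` for a nonzero idempotent `Q` is inherited by
`1 - Q` (Kato): writing `x = u + v` with `u` in the range and `v` in the kernel, and exchanging the
lengths of `u` and `v`, one gets a vector `y` with `‖y‖ = ‖x‖` and `‖Q y‖ = ‖v‖`. Take
`x = vstar - Φ *ᵥ c`, for which `x - Q x = vstar - vX`; the point `Pr *ᵥ vstar` has the form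
`Φ *ᵥ c`.
-/

section Idempotent

variable {𝕜 E : Type*} [RCLike 𝕜] [NormedAddCommGroup E] [InnerProductSpace 𝕜 E]

theorem norm_swap_lengths {u v : E} (hu : u ≠ 0) (hv : v ≠ 0) :
    ‖((‖v‖ / ‖u‖ : ℝ) : 𝕜) • u + ((‖u‖ / ‖v‖ : ℝ) : 𝕜) • v‖ = ‖u + v‖ := by
  have hu' : ‖u‖ ≠ 0 := norm_ne_zero_iff.mpr hu
  have hv' : ‖v‖ ≠ 0 := norm_ne_zero_iff.mpr hv
  rw [← sq_eq_sq₀ (norm_nonneg _) (norm_nonneg _), norm_add_sq (𝕜 := 𝕜), norm_add_sq (𝕜 := 𝕜)]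
  simp only [norm_smul, inner_smul_left, inner_smul_right, RCLike.conj_ofReal,
    RCLike.re_ofReal_mul, RCLike.norm_ofReal, abs_div, abs_norm]
  field_simp
  ring

variable {Q : E →ₗ[𝕜] E} {K : ℝ}

theorem one_le_of_isIdempotentElem_of_norm_le (hQ : IsIdempotentElem Q) (hQ0 : Q ≠ 0)
    (hK : ∀ x, ‖Q x‖ ≤ K * ‖x‖) : 1 ≤ K := by
  obtain ⟨x, hx⟩ := DFunLike.ne_iff.mp hQ0
  have hfix : Q (Q x) = Q x := LinearMap.congr_fun hQ x
  have hle := hK (Q x)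
  rw [hfix] at hle
  exact le_of_mul_le_mul_right (by rwa [one_mul]) (norm_pos_iff.mpr hx)

theorem norm_sub_apply_le_of_isIdempotentElem (hQ : IsIdempotentElem Q) (hQ0 : Q ≠ 0)
    (hK : ∀ x, ‖Q x‖ ≤ K * ‖x‖) (x : E) : ‖x - Q x‖ ≤ K * ‖x‖ := by
  have hK1 : 1 ≤ K := one_le_of_isIdempotentElem_of_norm_le hQ hQ0 hK
  have hrange : Q (Q x) = Q x := LinearMap.congr_fun hQ x
  have hker : Q (x - Q x) = 0 := by rw [map_sub, hrange, sub_self]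
  rcases eq_or_ne (Q x) 0 with hu | hu
  · rw [hu, sub_zero]
    exact le_mul_of_one_le_left (norm_nonneg x) hK1
  rcases eq_or_ne (x - Q x) 0 with hv | hv
  · rw [hv, norm_zero]
    positivity
  set a : ℝ := ‖x - Q x‖ / ‖Q x‖ with ha
  set b : ℝ := ‖Q x‖ / ‖x - Q x‖
  have hproj : Q ((a : 𝕜) • Q x + (b : 𝕜) • (x - Q x)) = (a : 𝕜) • Q x := by
    rw [map_add, map_smul, map_smul, hrange, hker, smul_zero, add_zero]
  calc ‖x - Q x‖ = ‖(a : 𝕜) • Q x‖ := by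
        rw [norm_smul, RCLike.norm_ofReal, ha, abs_div, abs_norm, abs_norm,
          div_mul_cancel₀ _ (norm_ne_zero_iff.mpr hu)]
    _ ≤ K * ‖(a : 𝕜) • Q x + (b : 𝕜) • (x - Q x)‖ := (congrArg norm hproj).symm.trans_le (hK _)
    _ = K * ‖x‖ := by rw [norm_swap_lengths hu hv, add_sub_cancel]

theorem norm_sub_apply_le_norm_sub_of_apply_eq_self (hQ : IsIdempotentElem Q) (hQ0 : Q ≠ 0)
    (hK : ∀ x, ‖Q x‖ ≤ K * ‖x‖) (v : E) {w : E} (hw : Q w = w) :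
    ‖v - Q v‖ ≤ K * ‖v - w‖ := by
  have h := norm_sub_apply_le_of_isIdempotentElem hQ hQ0 hK (v - w)
  rwa [map_sub, hw, sub_sub_sub_cancel_right] at h

end Idempotent

section WeightedNorm

variable {N : ℕ} {ξ : Fin N → ℝ}

theorem exists_linearEquiv_norm_eq_wnorm (hξ : ∀ i, 0 < ξ i) :
    ∃ T : (Fin N → ℝ) ≃ₗ[ℝ] EuclideanSpace ℝ (Fin N), ∀ x, ‖T x‖ = wnorm ξ x := by
  let scale : (Fin N → ℝ) ≃ₗ[ℝ] (Fin N → ℝ) := .piCongrRight fun i =>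
    .smulOfNeZero ℝ ℝ √(ξ i) (Real.sqrt_pos.mpr (hξ i)).ne'
  refine ⟨scale ≪≫ₗ (WithLp.linearEquiv 2 ℝ (Fin N → ℝ)).symm, fun x => ?_⟩
  have hcoord (i : Fin N) : ‖√(ξ i) * x i‖ ^ 2 = ξ i * x i ^ 2 := by
    rw [Real.norm_eq_abs, sq_abs, mul_pow, Real.sq_sqrt (hξ i).le]
  rw [EuclideanSpace.norm_eq, wnorm]
  exact congrArg Real.sqrt (Finset.sum_congr rfl fun i _ => hcoord i)

theorem wnorm_sub_mulVec_le (hξ : ∀ i, 0 < ξ i) {Q : Matrix (Fin N) (Fin N) ℝ}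
    (hQ : IsIdempotentElem Q) (hQ0 : Q ≠ 0) {K : ℝ}
    (hK : ∀ x, wnorm ξ (Q *ᵥ x) ≤ K * wnorm ξ x) (v : Fin N → ℝ) {w : Fin N → ℝ}
    (hw : Q *ᵥ w = w) : wnorm ξ (v - Q *ᵥ v) ≤ K * wnorm ξ (v - w) := by
  obtain ⟨T, hT⟩ := exists_linearEquiv_norm_eq_wnorm hξ
  let Q' : Module.End ℝ (EuclideanSpace ℝ (Fin N)) := T.conjAlgEquiv ℝ (toLinAlgEquiv' Q)
  have hQ'T (x : Fin N → ℝ) : Q' (T x) = T (Q *ᵥ x) := by simp [Q']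
  have hQ' : IsIdempotentElem Q' := (hQ.map toLinAlgEquiv').map (T.conjAlgEquiv ℝ)
  have hQ'0 : Q' ≠ 0 := by simpa [Q'] using hQ0
  have hK' (y : EuclideanSpace ℝ (Fin N)) : ‖Q' y‖ ≤ K * ‖y‖ := by
    obtain ⟨x, rfl⟩ := T.surjective y
    rw [hQ'T, hT, hT]
    exact hK x
  have h := norm_sub_apply_le_norm_sub_of_apply_eq_self hQ' hQ'0 hK' (T v)
    (w := T w) (by rw [hQ'T, hw])
  rwa [hQ'T, ← map_sub, ← map_sub, hT, hT] at h

end WeightedNorm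

section ObliqueProjection

variable {R n ι : Type*} [CommRing R] [Fintype n] [Fintype ι] [DecidableEq ι]
  {Φ : Matrix n ι R} {B : Matrix ι n R}

/-- The projection onto the column space of `Φ` along the kernel of `B`. It is meaningful only when
`B * Φ` is invertible, since `⁻¹` is zero on singular matrices. -/
noncomputable def obliqueProjection (Φ : Matrix n ι R) (B : Matrix ι n R) : Matrix n n R :=
  Φ * (B * Φ)⁻¹ * B

theorem obliqueProjection_mul_self (h : IsUnit (B * Φ)) : obliqueProjection Φ B * Φ = Φ := by
  rw [obliqueProjection, Matrix.mul_assoc,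
    nonsing_inv_mul_cancel_right _ _ ((isUnit_iff_isUnit_det _).mp h)]

theorem isIdempotentElem_obliqueProjection (h : IsUnit (B * Φ)) :
    IsIdempotentElem (obliqueProjection Φ B) := by
  change obliqueProjection Φ B * (Φ * (B * Φ)⁻¹ * B) = Φ * (B * Φ)⁻¹ * B
  simp only [← Matrix.mul_assoc, obliqueProjection_mul_self h]

theorem obliqueProjection_ne_zero [Nontrivial R] [Nonempty ι] (h : IsUnit (B * Φ)) :
    obliqueProjection Φ B ≠ 0 := by
  intro h0
  have hΦ : Φ = 0 := by rw [← obliqueProjection_mul_self h, h0, Matrix.zero_mul]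
  exact h.ne_zero (by rw [hΦ, Matrix.mul_zero])

end ObliqueProjection

section Stochastic

variable {n : Type*} [Fintype n] [DecidableEq n]

open scoped Matrix.Norms.Operator in
theorem linfty_opNorm_le_one_of_mem_rowStochastic {P : Matrix n n ℝ} (hP : P ∈ rowStochastic ℝ n) :
    ‖P‖ ≤ 1 := by
  rw [linfty_opNorm_def, NNReal.coe_le_one]
  refine Finset.sup_le fun i _ => NNReal.coe_le_coe.mp ?_
  simp only [NNReal.coe_sum, coe_nnnorm, Real.norm_of_nonneg (nonneg_of_mem_rowStochastic hP),
    sum_row_of_mem_rowStochastic hP, NNReal.coe_one, le_refl]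

open scoped Matrix.Norms.Operator in
theorem isUnit_one_sub_smul_of_mem_rowStochastic {P : Matrix n n ℝ} (hP : P ∈ rowStochastic ℝ n)
    {γ : ℝ} (hγ : |γ| < 1) : IsUnit (1 - γ • P) := by
  refine isUnit_one_sub_of_norm_lt_one ?_
  calc ‖γ • P‖ = |γ| * ‖P‖ := by rw [norm_smul, Real.norm_eq_abs]
    _ ≤ |γ| := mul_le_of_le_one_right (abs_nonneg γ)
        (linfty_opNorm_le_one_of_mem_rowStochastic hP)
    _ < 1 := hγ

end Stochastic

theorem stmt_12_general {N : ℕ} {ι : Type*} [Fintype ι] [DecidableEq ι] [Nonempty ι]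
    {L : Matrix (Fin N) (Fin N) ℝ} {v r : Fin N → ℝ} (hv : L *ᵥ v = r)
    {ξ : Fin N → ℝ} (hξ : ∀ i, 0 < ξ i) {Φ X : Matrix (Fin N) ι ℝ}
    (hX : IsUnit (Xᵀ * L * Φ)) {K : ℝ}
    (hK : ∀ x, wnorm ξ ((Φ * (Xᵀ * L * Φ)⁻¹ * Xᵀ * L) *ᵥ x) ≤ K * wnorm ξ x) (c : ι → ℝ) :
    wnorm ξ (v - (Φ * (Xᵀ * L * Φ)⁻¹ * Xᵀ) *ᵥ r) ≤ K * wnorm ξ (v - Φ *ᵥ c) := by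
  have hproj : Φ * (Xᵀ * L * Φ)⁻¹ * Xᵀ * L = obliqueProjection Φ (Xᵀ * L) :=
    Matrix.mul_assoc _ _ _
  have hfix : obliqueProjection Φ (Xᵀ * L) *ᵥ (Φ *ᵥ c) = Φ *ᵥ c := by
    rw [mulVec_mulVec, obliqueProjection_mul_self hX]
  rw [hproj] at hK
  rw [← hv, mulVec_mulVec, hproj]
  exact wnorm_sub_mulVec_le hξ (isIdempotentElem_obliqueProjection hX)
    (obliqueProjection_ne_zero hX) hK v hfix

theorem stmt_12 (N m : ℕ) (hm : 0 < m) (hmN : m ≤ N)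
    (P : Matrix (Fin N) (Fin N) ℝ)
    (hP0 : ∀ i j, 0 ≤ P i j) (hP1 : ∀ i, ∑ j, P i j = 1)
    (γ : ℝ) (hγ0 : 0 < γ) (hγ1 : γ < 1)
    (r : Fin N → ℝ)
    (L : Matrix (Fin N) (Fin N) ℝ) (hL : L = 1 - γ • P)
    (vstar : Fin N → ℝ) (hv : vstar = L⁻¹.mulVec r)
    (ξ : Fin N → ℝ) (hξ : ∀ i, 0 < ξ i)
    (Φ : Matrix (Fin N) (Fin m) ℝ) (hΦ : Function.Injective Φ.mulVec)
    (Pr : Matrix (Fin N) (Fin N) ℝ)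
    (hPr : Pr = Φ * (Φᵀ * Matrix.diagonal ξ * Φ)⁻¹ * Φᵀ * Matrix.diagonal ξ)
    (X : Matrix (Fin N) (Fin m) ℝ)
    (hX1 : IsUnit (Xᵀ * Φ)) (hX2 : IsUnit (Xᵀ * L * Φ))
    (PiLX : Matrix (Fin N) (Fin N) ℝ) (hPiLX : PiLX = Φ * (Xᵀ * L * Φ)⁻¹ * Xᵀ * L)
    (vX : Fin N → ℝ) (hvX : vX = (Φ * (Xᵀ * L * Φ)⁻¹ * Xᵀ).mulVec r)
    (K : ℝ) (hK : 0 ≤ K)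
    (hKbound : ∀ x : Fin N → ℝ, wnorm ξ (PiLX.mulVec x) ≤ K * wnorm ξ x) :
    wnorm ξ (vstar - vX) ≤ K * wnorm ξ (vstar - Pr.mulVec vstar) := by
  have : Nonempty (Fin m) := ⟨⟨0, hm⟩⟩
  have hLunit : IsUnit L := hL ▸ isUnit_one_sub_smul_of_mem_rowStochastic
    (mem_rowStochastic_iff_sum.mpr ⟨hP0, hP1⟩) (abs_lt.mpr ⟨by linarith, hγ1⟩)
  have hLv : L *ᵥ vstar = r := by
    rw [hv, mulVec_mulVec, mul_nonsing_inv _ ((isUnit_iff_isUnit_det _).mp hLunit), one_mulVec]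
  obtain ⟨c, hc⟩ : ∃ c, Pr *ᵥ vstar = Φ *ᵥ c :=
    ⟨((Φᵀ * diagonal ξ * Φ)⁻¹ * Φᵀ * diagonal ξ) *ᵥ vstar, by
      simp only [hPr, mulVec_mulVec, Matrix.mul_assoc]⟩
  rw [hc, hvX]
  exact stmt_12_general hLv hξ hX2 (hPiLX ▸ hKbound) c
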